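/- Let γ > 0, let F : (0,∞) × ℝ → ℝ be C², and let W(s) = s²(1−s)². Suppose ρ : ℝ → (0,∞) and φ : ℝ → ℝ are twice continuously differentiable and satisfy, for all x ∈ ℝ, d/dx[ −F(ρ,φ) − (1/γ)W(φ) − (γ/2)φ′² + ρ·∂F/∂ρ(ρ,φ) ] = −γ d/dx[ φ′² ] and (1/γ)W′(φ) + ∂F/∂φ(ρ,φ) = γ φ″, together with the far-field conditions ρ(x) → ρ_V, φ(x) → 0, φ′(x) → 0 as x → −∞ and ρ(x) → ρ_L, φ(x) → 1, φ′(x) → 0 as x → +∞, where ρ_V, ρ_L > 0 and ∂F/∂ρ(ρ_V, 0) = 0. Then the bulk free energy densities of the two phases coincide: F(ρ_L, 1) = F(ρ_V, 0). -/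

import Mathlib

open Set Filter

/-!
Let `E = F(ρ,φ) + W(φ)/γ - (γ/2)φ'²` and let `μ = ∂F/∂ρ` be the chemical potential along the
profile. The Allen–Cahn equation, multiplied by `φ'`, says `E' = ρ'μ`, and the momentum equation
says `E' = (ρμ)'`. Hence `ρμ' = 0`, so `μ` is constant and, by its limit at the vapor end, zero.
Then `E` is constant too, and comparing its limits at the two ends gives the claim.
-/

section Calculus

variable {𝕜 E : Type*} [NontriviallyNormedField 𝕜] [NormedAddCommGroup E] [NormedSpace 𝕜 E]
  {F : 𝕜 → 𝕜 → E}

theorem deriv_left_eq_fderiv_uncurry {p : 𝕜 × 𝕜}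
    (hF : DifferentiableAt 𝕜 (Function.uncurry F) p) :
    deriv (fun r => F r p.2) p.1 = fderiv 𝕜 (Function.uncurry F) p (1, 0) :=
  (HasFDerivAt.comp_hasDerivAt (f := fun r => (r, p.2)) p.1 hF.hasFDerivAt
    ((hasDerivAt_id p.1).prodMk (hasDerivAt_const p.1 p.2))).deriv

theorem deriv_right_eq_fderiv_uncurry {p : 𝕜 × 𝕜}
    (hF : DifferentiableAt 𝕜 (Function.uncurry F) p) :
    deriv (fun s => F p.1 s) p.2 = fderiv 𝕜 (Function.uncurry F) p (0, 1) :=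
  (HasFDerivAt.comp_hasDerivAt (f := fun s => (p.1, s)) p.2 hF.hasFDerivAt
    ((hasDerivAt_const p.2 p.1).prodMk (hasDerivAt_id p.2))).deriv

theorem hasDerivAt_comp₂ {u v : 𝕜 → 𝕜} {u' v' x : 𝕜}
    (hF : DifferentiableAt 𝕜 (Function.uncurry F) (u x, v x))
    (hu : HasDerivAt u u' x) (hv : HasDerivAt v v' x) :
    HasDerivAt (fun y => F (u y) (v y))
      (u' • deriv (fun r => F r (v x)) (u x) + v' • deriv (fun s => F (u x) s) (v x)) x := by
  have hsplit : (u', v') = u' • ((1, 0) : 𝕜 × 𝕜) + v' • ((0, 1) : 𝕜 × 𝕜) := by simp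
  have h := hF.hasFDerivAt.comp_hasDerivAt x (hu.prodMk hv)
  rwa [hsplit, map_add, map_smul, map_smul, ← deriv_left_eq_fderiv_uncurry hF,
    ← deriv_right_eq_fderiv_uncurry hF] at h

end Calculus

theorem eq_of_hasDerivAt_zero_of_tendsto {𝕜 G : Type*} [RCLike 𝕜] [NormedAddCommGroup G]
    [NormedSpace 𝕜 G] {f : 𝕜 → G} {l : Filter 𝕜} [l.NeBot] {c : G}
    (hf : ∀ x, HasDerivAt f 0 x) (hlim : Tendsto f l (nhds c)) (x : 𝕜) : f x = c := by
  have hconst : ∀ y, f x = f y := fun y =>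
    is_const_of_deriv_eq_zero (fun z => (hf z).differentiableAt) (fun z => (hf z).deriv) x y
  exact tendsto_nhds_unique (tendsto_const_nhds.congr hconst) hlim

/-- The chemical potential `∂F/∂ρ` at the state `(r, s)`. -/
noncomputable def chemicalPotential (F : ℝ → ℝ → ℝ) (r s : ℝ) : ℝ :=
  deriv (fun t => F t s) r

theorem differentiableAt_chemicalPotential {F : ℝ → ℝ → ℝ} {p : ℝ × ℝ}
    (hF : ContDiffAt ℝ 2 (Function.uncurry F) p) :
    DifferentiableAt ℝ (Function.uncurry (chemicalPotential F)) p := by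
  have hfderiv : DifferentiableAt ℝ (fderiv ℝ (Function.uncurry F)) p :=
    (hF.fderiv_right (m := 1) (by norm_num)).differentiableAt one_ne_zero
  refine (hfderiv.clm_apply (differentiableAt_const (1, 0))).congr_of_eventuallyEq ?_
  filter_upwards [hF.eventually (by simp)] with q hq
  exact deriv_left_eq_fderiv_uncurry (hq.differentiableAt two_ne_zero)

/-- A planar static equilibrium with density `ρ` and phase field `φ`: the momentum balance and the
Allen–Cahn equation for the free energy density `F(ρ,φ) + a W(φ) + (κ/2) φ'²`. The model of the
paper is `a = 1/γ`, `κ = γ`. -/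
structure IsStaticEquilibrium (a κ : ℝ) (F : ℝ → ℝ → ℝ) (W ρ φ : ℝ → ℝ) : Prop where
  differentiable_density : Differentiable ℝ ρ
  differentiable_phase : Differentiable ℝ φ
  differentiable_deriv_phase : Differentiable ℝ (deriv φ)
  momentum : ∀ x,
    deriv (fun y => -F (ρ y) (φ y) - a * W (φ y) - (κ / 2) * (deriv φ y) ^ 2
      + ρ y * chemicalPotential F (ρ y) (φ y)) x = -κ * deriv (fun y => (deriv φ y) ^ 2) x
  allenCahn : ∀ x,
    a * deriv W (φ x) + deriv (fun s => F (ρ x) s) (φ x) = κ * deriv (deriv φ) x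

/-- The first integral `F(ρ,φ) + a W(φ) - (κ/2) φ'²`, whose constancy along a profile is the
equipartition identity. -/
noncomputable def firstIntegral (a κ : ℝ) (F : ℝ → ℝ → ℝ) (W ρ φ : ℝ → ℝ) (x : ℝ) : ℝ :=
  F (ρ x) (φ x) + a * W (φ x) - (κ / 2) * (deriv φ x) ^ 2

theorem tendsto_firstIntegral {a κ : ℝ} {F : ℝ → ℝ → ℝ} {W ρ φ : ℝ → ℝ} {l : Filter ℝ} {r s : ℝ}
    (hF : ContinuousAt (Function.uncurry F) (r, s)) (hW : ContinuousAt W s)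
    (hρ : Tendsto ρ l (nhds r)) (hφ : Tendsto φ l (nhds s))
    (hφ' : Tendsto (deriv φ) l (nhds 0)) :
    Tendsto (firstIntegral a κ F W ρ φ) l (nhds (F r s + a * W s)) := by
  have hbulk : Tendsto (fun y => F (ρ y) (φ y)) l (nhds (F r s)) :=
    hF.tendsto.comp (hρ.prodMk_nhds hφ)
  have hwell : Tendsto (fun y => W (φ y)) l (nhds (W s)) := hW.tendsto.comp hφ
  have hgrad : Tendsto (fun y => κ / 2 * deriv φ y ^ 2) l (nhds 0) := by
    simpa using (hφ'.pow 2).const_mul (κ / 2)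
  have hlim := (hbulk.add (hwell.const_mul a)).sub hgrad
  rwa [sub_zero] at hlim

namespace IsStaticEquilibrium

variable {a κ : ℝ} {F : ℝ → ℝ → ℝ} {W ρ φ : ℝ → ℝ} {x : ℝ}

theorem hasDerivAt_firstIntegral (h : IsStaticEquilibrium a κ F W ρ φ)
    (hF : DifferentiableAt ℝ (Function.uncurry F) (ρ x, φ x))
    (hW : DifferentiableAt ℝ W (φ x)) :
    HasDerivAt (firstIntegral a κ F W ρ φ) (deriv ρ x * chemicalPotential F (ρ x) (φ x)) x := by
  have hφ := (h.differentiable_phase x).hasDerivAt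
  have hbulk := hasDerivAt_comp₂ hF (h.differentiable_density x).hasDerivAt hφ
  have hwell : HasDerivAt (fun y => W (φ y)) (deriv W (φ x) * deriv φ x) x :=
    hW.hasDerivAt.comp x hφ
  have hgrad := (h.differentiable_deriv_phase x).hasDerivAt.pow 2
  refine ((hbulk.add (hwell.const_mul a)).sub (hgrad.const_mul (κ / 2))).congr_deriv ?_
  simp only [smul_eq_mul, chemicalPotential]
  linear_combination deriv φ x * h.allenCahn x

theorem hasDerivAt_chemicalPotential (h : IsStaticEquilibrium a κ F W ρ φ)
    (hF : ContDiffAt ℝ 2 (Function.uncurry F) (ρ x, φ x))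
    (hW : DifferentiableAt ℝ W (φ x)) (hρ : ρ x ≠ 0) :
    HasDerivAt (fun y => chemicalPotential F (ρ y) (φ y)) 0 x := by
  set μ : ℝ → ℝ := fun y => chemicalPotential F (ρ y) (φ y)
  have hμ : HasDerivAt μ (deriv μ x) x :=
    (hasDerivAt_comp₂ (differentiableAt_chemicalPotential hF)
      (h.differentiable_density x).hasDerivAt
      (h.differentiable_phase x).hasDerivAt).differentiableAt.hasDerivAt
  have hint := h.hasDerivAt_firstIntegral (hF.differentiableAt two_ne_zero) hW
  have hgrad : HasDerivAt (fun y => deriv φ y ^ 2) (deriv (fun y => deriv φ y ^ 2) x) x :=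
    ((h.differentiable_deriv_phase x).pow 2).hasDerivAt
  have hflux := (hint.neg.sub (hgrad.const_mul κ)).add
    ((h.differentiable_density x).hasDerivAt.mul hμ)
  have hmomentum : deriv (fun y => -firstIntegral a κ F W ρ φ y - κ * deriv φ y ^ 2 + ρ y * μ y) x
      = -κ * deriv (fun y => deriv φ y ^ 2) x := by
    rw [← h.momentum x]
    congr 1
    funext y
    simp only [firstIntegral, μ]
    ring
  have hzero : ρ x * deriv μ x = 0 := by linear_combination hflux.deriv.symm.trans hmomentum
  rwa [(mul_eq_zero.mp hzero).resolve_left hρ] at hμ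

theorem chemicalPotential_eq_zero (h : IsStaticEquilibrium a κ F W ρ φ)
    (hF : ∀ x, ContDiffAt ℝ 2 (Function.uncurry F) (ρ x, φ x)) (hW : Differentiable ℝ W)
    (hρ : ∀ x, ρ x ≠ 0) {l : Filter ℝ} [l.NeBot] {r s : ℝ}
    (hFl : ContDiffAt ℝ 2 (Function.uncurry F) (r, s))
    (hρl : Tendsto ρ l (nhds r)) (hφl : Tendsto φ l (nhds s))
    (hcrit : chemicalPotential F r s = 0) (x : ℝ) :
    chemicalPotential F (ρ x) (φ x) = 0 := by
  have hlim : Tendsto (fun y => chemicalPotential F (ρ y) (φ y)) l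
      (nhds (chemicalPotential F r s)) :=
    (differentiableAt_chemicalPotential hFl).continuousAt.tendsto.comp (hρl.prodMk_nhds hφl)
  rw [hcrit] at hlim
  exact eq_of_hasDerivAt_zero_of_tendsto
    (fun y => h.hasDerivAt_chemicalPotential (hF y) (hW (φ y)) (hρ y)) hlim x

theorem firstIntegral_eq (h : IsStaticEquilibrium a κ F W ρ φ)
    (hF : ∀ x, DifferentiableAt ℝ (Function.uncurry F) (ρ x, φ x)) (hW : Differentiable ℝ W)
    (hμ : ∀ x, chemicalPotential F (ρ x) (φ x) = 0) {l : Filter ℝ} [l.NeBot] {r s : ℝ}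
    (hFl : ContinuousAt (Function.uncurry F) (r, s))
    (hρl : Tendsto ρ l (nhds r)) (hφl : Tendsto φ l (nhds s))
    (hφ'l : Tendsto (deriv φ) l (nhds 0)) (x : ℝ) :
    firstIntegral a κ F W ρ φ x = F r s + a * W s := by
  have hderiv : ∀ y, HasDerivAt (firstIntegral a κ F W ρ φ) 0 y := fun y => by
    simpa only [hμ y, mul_zero] using h.hasDerivAt_firstIntegral (hF y) (hW (φ y))
  exact eq_of_hasDerivAt_zero_of_tendsto hderiv
    (tendsto_firstIntegral hFl (hW s).continuousAt hρl hφl hφ'l) x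

end IsStaticEquilibrium

theorem bulk_free_energies_coincide_general {a κ : ℝ} {F : ℝ → ℝ → ℝ} {W ρ φ : ℝ → ℝ}
    (h : IsStaticEquilibrium a κ F W ρ φ)
    (hF : ∀ x, ContDiffAt ℝ 2 (Function.uncurry F) (ρ x, φ x)) (hW : Differentiable ℝ W)
    (hρ : ∀ x, ρ x ≠ 0) {lV lL : Filter ℝ} [lV.NeBot] [lL.NeBot] {ρV φV ρL φL : ℝ}
    (hFV : ContDiffAt ℝ 2 (Function.uncurry F) (ρV, φV))
    (hFL : ContinuousAt (Function.uncurry F) (ρL, φL)) (hWVL : W φV = W φL)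
    (hρV : Tendsto ρ lV (nhds ρV)) (hφV : Tendsto φ lV (nhds φV))
    (hφ'V : Tendsto (deriv φ) lV (nhds 0))
    (hρL : Tendsto ρ lL (nhds ρL)) (hφL : Tendsto φ lL (nhds φL))
    (hφ'L : Tendsto (deriv φ) lL (nhds 0))
    (hcrit : chemicalPotential F ρV φV = 0) :
    F ρL φL = F ρV φV := by
  have hμ := h.chemicalPotential_eq_zero hF hW hρ hFV hρV hφV hcrit
  have hdiff := fun x => (hF x).differentiableAt two_ne_zero
  have hV := h.firstIntegral_eq hdiff hW hμ hFV.continuousAt hρV hφV hφ'V 0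
  have hL := h.firstIntegral_eq hdiff hW hμ hFL hρL hφL hφ'L 0
  rw [hV, hWVL] at hL
  exact (add_right_cancel hL).symm

/-- **Equality of the bulk free energy densities of the two phases.**
For a planar static equilibrium of the compressible Navier–Stokes–Allen–Cahn model
connecting the vapor state `(ρ_V, 0)` at `x → −∞` to the liquid state `(ρ_L, 1)` at
`x → +∞`, with `∂F/∂ρ(ρ_V,0) = 0`, one has `F(ρ_L,1) = F(ρ_V,0)`. -/
theorem bulk_free_energies_coincide
    (γ : ℝ) (hγ : 0 < γ)
    (F : ℝ → ℝ → ℝ)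
    (hF : ContDiffOn ℝ 2 (fun p : ℝ × ℝ => F p.1 p.2) (Ioi (0:ℝ) ×ˢ (univ : Set ℝ)))
    (W : ℝ → ℝ) (hW : W = fun s => s ^ 2 * (1 - s) ^ 2)
    (ρ φ : ℝ → ℝ)
    (hρ : ContDiff ℝ 2 ρ) (hφ : ContDiff ℝ 2 φ)
    (hρpos : ∀ x, 0 < ρ x)
    (ode1 : ∀ x : ℝ,
      deriv (fun y =>
          -F (ρ y) (φ y) - (1/γ) * W (φ y) - (γ/2) * (deriv φ y) ^ 2
            + ρ y * deriv (fun r => F r (φ y)) (ρ y)) x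
        = -γ * deriv (fun y => (deriv φ y) ^ 2) x)
    (ode2 : ∀ x : ℝ,
      (1/γ) * deriv W (φ x) + deriv (fun s => F (ρ x) s) (φ x)
        = γ * deriv (deriv φ) x)
    (ρV ρL : ℝ) (hρV : 0 < ρV) (hρL : 0 < ρL)
    (hlimρ : Tendsto ρ atBot (nhds ρV))
    (hlimφ : Tendsto φ atBot (nhds 0))
    (hlimφ' : Tendsto (deriv φ) atBot (nhds 0))
    (hlimρtop : Tendsto ρ atTop (nhds ρL))
    (hlimφtop : Tendsto φ atTop (nhds 1))
    (hlimφ'top : Tendsto (deriv φ) atTop (nhds 0))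
    (hcrit : deriv (fun r => F r 0) ρV = 0) :
    F ρL 1 = F ρV 0 := by
  have hF' : ∀ r s, 0 < r → ContDiffAt ℝ 2 (Function.uncurry F) (r, s) := fun r s hr =>
    hF.contDiffAt ((isOpen_Ioi.prod isOpen_univ).mem_nhds ⟨hr, mem_univ s⟩)
  have heq : IsStaticEquilibrium (1 / γ) γ F W ρ φ :=
    ⟨hρ.differentiable two_ne_zero, hφ.differentiable two_ne_zero,
      hφ.differentiable_deriv_two, ode1, ode2⟩
  exact bulk_free_energies_coincide_general heq (fun x => hF' _ _ (hρpos x))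
    (by rw [hW]; fun_prop) (fun x => (hρpos x).ne') (hF' _ _ hρV) (hF' _ _ hρL).continuousAt
    (by simp [hW]) hlimρ hlimφ hlimφ' hlimρtop hlimφtop hlimφ'top hcrit
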